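/- For every integer k ≥ 4 and all reals x_1, x_2 ≥ 0 with x_1 + x_2 ≤ 1, one has C_k(x_1, x_2) ≤ C_{k+1}(x_1, x_2). -/

import Mathlib

/-- The cumulative distribution function `F(z) = min((11/6)z, 1)` of the ICUT scheme. -/
noncomputable def Fcdf (z : ℝ) : ℝ := min ((11 / 6) * z) 1

/-- The probability density `F′(z)`: `11/6` for `z < 6/11` and `0` for `z ≥ 6/11`. -/
noncomputable def Fpdf (z : ℝ) : ℝ := if z < 6 / 11 then 11 / 6 else 0

/-- The density `d_k(x)` with which ICUT cuts an infinitesimal `1,2`-aligned segment at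
`x = (x_1, …, x_k)`:
`d_k(x) = (1/k!) ∑_σ [ F′(x_1) ∏_{i : σ(i) < σ(1)} (1 − F(x_i))
                      + F′(x_2) ∏_{i : σ(i) < σ(2)} (1 − F(x_i)) ]`. -/
noncomputable def dDensity (k : ℕ) (hk : 2 ≤ k) (x : Fin k → ℝ) : ℝ :=
  ((Nat.factorial k : ℝ))⁻¹ *
    ∑ σ : Equiv.Perm (Fin k),
      (Fpdf (x ⟨0, by omega⟩) *
          ∏ i ∈ Finset.univ.filter (fun i => σ i < σ ⟨0, by omega⟩), (1 - Fcdf (x i)) +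
        Fpdf (x ⟨1, by omega⟩) *
          ∏ i ∈ Finset.univ.filter (fun i => σ i < σ ⟨1, by omega⟩), (1 - Fcdf (x i)))

/-- `C_k(x_1, x_2) = d_k(x_1, x_2, c, …, c)` where `c = (1 − x_1 − x_2)/(k − 2)`. -/
noncomputable def Cdensity (k : ℕ) (hk : 3 ≤ k) (x1 x2 : ℝ) : ℝ :=
  dDensity k (by omega)
    (fun i => if (i : ℕ) = 0 then x1 else if (i : ℕ) = 1 then x2
      else (1 - x1 - x2) / ((k : ℝ) - 2))

/-!
Let the terminals arrive at independent uniform times, so that their order is a uniformly random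
permutation. Conditioning on the arrival time `t` of terminal `j`, every other terminal `i` arrives
earlier with probability `t`, independently of the rest, and so
`(1/k!) ∑_σ ∏_{σ(i) < σ(j)} (1 − F(x_i)) = ∫₀¹ ∏_{i ≠ j} (1 − t F(x_i)) dt`.
At `x = (x_1, x_2, c, …, c)` the only factor of the integrand that depends on `k` is
`(1 − t F(c))^(k−2)`. As long as `c ≤ 6/11`, we have `F(c) = (11/6) c` with `c` inversely
proportional to `k − 2`, so this factor has the form `(1 − y/n)^n` with `n = k − 2`, which increases
with `n` by Bernoulli's inequality.
-/

section RandomOrder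

open Finset
open scoped Nat

variable {ι : Type*} [Fintype ι] [LinearOrder ι]

lemma card_filter_forall_mem_le_eq_one {α β : Type*} [LinearOrder β] {s : Finset α}
    (hs : s.Nonempty) {f : α → β} [DecidablePred fun a => ∀ i ∈ s, f i ≤ f a]
    (hf : Function.Injective f) :
    #{a ∈ s | ∀ i ∈ s, f i ≤ f a} = 1 := by
  obtain ⟨m, hm, hmax⟩ := exists_max_image s f hs
  refine card_eq_one.2 ⟨m, ?_⟩
  ext a
  simp only [mem_filter, mem_singleton]
  constructor
  · rintro ⟨ha, hamax⟩
    exact hf ((hmax a ha).antisymm (hamax m hm))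
  · rintro rfl
    exact ⟨hm, hmax⟩

lemma card_perm_forall_mem_le_eq {s : Finset ι} {a b : ι} (ha : a ∈ s) (hb : b ∈ s) :
    #{σ : Equiv.Perm ι | ∀ i ∈ s, σ i ≤ σ a} = #{σ : Equiv.Perm ι | ∀ i ∈ s, σ i ≤ σ b} := by
  have swap_mem_iff (i : ι) : Equiv.swap a b i ∈ s ↔ i ∈ s := by
    rcases eq_or_ne i a with rfl | hia
    · simp only [Equiv.swap_apply_left, ha, hb]
    rcases eq_or_ne i b with rfl | hib
    · simp only [Equiv.swap_apply_right, ha, hb]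
    · rw [Equiv.swap_apply_of_ne_of_ne hia hib]
  refine card_equiv (Equiv.mulRight (Equiv.swap a b)) fun σ => ?_
  simp only [mem_filter, mem_univ, true_and, Equiv.coe_mulRight, Equiv.Perm.mul_apply,
    Equiv.swap_apply_right]
  exact ((Equiv.swap a b).forall_congr fun i => by rw [swap_mem_iff]).symm

lemma card_mul_card_perm_forall_mem_le {s : Finset ι} {j : ι} (hj : j ∈ s) :
    #s * #{σ : Equiv.Perm ι | ∀ i ∈ s, σ i ≤ σ j} = (Fintype.card ι)! :=
  calc #s * #{σ : Equiv.Perm ι | ∀ i ∈ s, σ i ≤ σ j}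
      = ∑ a ∈ s, #{σ : Equiv.Perm ι | ∀ i ∈ s, σ i ≤ σ a} := by
        rw [sum_congr rfl fun a ha => card_perm_forall_mem_le_eq ha hj, sum_const, smul_eq_mul]
    _ = ∑ σ : Equiv.Perm ι, #{a ∈ s | ∀ i ∈ s, σ i ≤ σ a} :=
        sum_card_bipartiteAbove_eq_sum_card_bipartiteBelow
          fun (a : ι) (σ : Equiv.Perm ι) => ∀ i ∈ s, σ i ≤ σ a
    _ = (Fintype.card ι)! := by
        rw [sum_congr rfl fun σ _ => card_filter_forall_mem_le_eq_one ⟨j, hj⟩ σ.injective,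
          sum_const, smul_eq_mul, mul_one, card_univ, Fintype.card_perm]

lemma card_add_one_mul_card_perm_forall_mem_lt {s : Finset ι} {j : ι} (hj : j ∉ s) :
    (#s + 1) * #{σ : Equiv.Perm ι | ∀ i ∈ s, σ i < σ j} = (Fintype.card ι)! := by
  rw [← card_mul_card_perm_forall_mem_le (mem_insert_self j s), card_insert_of_notMem hj]
  congr 2
  ext σ
  simp only [mem_filter, mem_univ, true_and, mem_insert, forall_eq_or_imp, le_refl]
  refine forall₂_congr fun i hi => ?_
  have hne : σ i ≠ σ j := σ.injective.ne (ne_of_mem_of_not_mem hi hj)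
  exact hne.le_iff_lt.symm

lemma inv_factorial_mul_card_perm_forall_mem_lt {s : Finset ι} {j : ι} (hj : j ∉ s) :
    ((Fintype.card ι)! : ℝ)⁻¹ * #{σ : Equiv.Perm ι | ∀ i ∈ s, σ i < σ j} =
      ∫ t in (0 : ℝ)..1, t ^ #s := by
  have count : ((#s : ℝ) + 1) * #{σ : Equiv.Perm ι | ∀ i ∈ s, σ i < σ j} =
      ((Fintype.card ι)! : ℝ) :=
    mod_cast card_add_one_mul_card_perm_forall_mem_lt hj
  rw [integral_pow, one_pow, zero_pow (Nat.succ_ne_zero _), sub_zero, inv_mul_eq_div,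
    div_eq_div_iff (by positivity) (by positivity), one_mul, mul_comm, count]

/-- Expanded over the sets `s` of indices other than `j`, the left side weights `∏ i ∈ s, -v i` with
the proportion of orders in which all of `s` precedes `j`, and the right side with
`∫ t in 0..1, t ^ #s`; both weights are `1 / (#s + 1)`. -/
lemma inv_factorial_mul_sum_perm_prod_one_sub_eq_integral (j : ι) (v : ι → ℝ) :
    ((Fintype.card ι)! : ℝ)⁻¹ * ∑ σ : Equiv.Perm ι, ∏ i with σ i < σ j, (1 - v i) =
      ∫ t in (0 : ℝ)..1, ∏ i ∈ univ.erase j, (1 - t * v i) :=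
  calc ((Fintype.card ι)! : ℝ)⁻¹ * ∑ σ : Equiv.Perm ι, ∏ i with σ i < σ j, (1 - v i)
      = ((Fintype.card ι)! : ℝ)⁻¹ * ∑ σ : Equiv.Perm ι,
          ∑ s ∈ (univ.filter fun i => σ i < σ j).powerset, ∏ i ∈ s, -v i := by
        simp only [sub_eq_add_neg, prod_one_add]
    _ = ((Fintype.card ι)! : ℝ)⁻¹ * ∑ s ∈ (univ.erase j).powerset,
          ∑ σ : Equiv.Perm ι with ∀ i ∈ s, σ i < σ j, ∏ i ∈ s, -v i := by
        rw [sum_comm' fun σ s => ?_]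
        simp only [mem_univ, true_and, mem_powerset, subset_iff, mem_filter, mem_erase, and_true]
        exact ⟨fun h => ⟨h, fun i hi => ne_of_apply_ne σ (h hi).ne⟩, And.left⟩
    _ = ∑ s ∈ (univ.erase j).powerset, (∫ t in (0 : ℝ)..1, t ^ #s) * ∏ i ∈ s, -v i := by
        rw [mul_sum]
        refine sum_congr rfl fun s hs => ?_
        have hj : j ∉ s := fun h => notMem_erase j univ (mem_powerset.1 hs h)
        rw [sum_const, nsmul_eq_mul, ← mul_assoc, inv_factorial_mul_card_perm_forall_mem_lt hj]
    _ = ∫ t in (0 : ℝ)..1, ∑ s ∈ (univ.erase j).powerset, t ^ #s * ∏ i ∈ s, -v i := by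
        rw [intervalIntegral.integral_finsetSum
          fun s _ => Continuous.intervalIntegrable (by fun_prop) _ _]
        simp only [intervalIntegral.integral_mul_const]
    _ = ∫ t in (0 : ℝ)..1, ∏ i ∈ univ.erase j, (1 - t * v i) := by
        simp only [sub_eq_add_neg, ← mul_neg, prod_one_add, prod_mul_distrib, prod_const]

end RandomOrder

lemma prod_univ_erase_eq_mul_pow {ι R : Type*} [Fintype ι] [DecidableEq ι] [CommMonoid R]
    {a b : ι} (hab : a ≠ b) {f : ι → R} {c : R} (hc : ∀ i, i ≠ a → i ≠ b → f i = c) :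
    ∏ i ∈ Finset.univ.erase a, f i = f b * c ^ (Fintype.card ι - 2) := by
  have hb : b ∈ Finset.univ.erase a := Finset.mem_erase.2 ⟨hab.symm, Finset.mem_univ b⟩
  rw [← Finset.mul_prod_erase _ f hb]
  congr 1
  calc ∏ i ∈ (Finset.univ.erase a).erase b, f i
      = c ^ ((Finset.univ.erase a).erase b).card := Finset.prod_eq_pow_card fun i hi => by
        rw [Finset.mem_erase, Finset.mem_erase] at hi
        exact hc i hi.2.1 hi.1
    _ = c ^ (Fintype.card ι - 2) := by
        rw [Finset.card_erase_of_mem hb, Finset.card_erase_of_mem (Finset.mem_univ a),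
          Finset.card_univ, Nat.sub_sub]

lemma pow_le_pow_succ_of_mul_add_one_le {R : Type*} [CommRing R] [LinearOrder R]
    [IsStrictOrderedRing R] {n : ℕ} {p q : R} (hp : 0 ≤ p) (h : n * p + 1 ≤ (n + 1) * q) :
    p ^ n ≤ q ^ (n + 1) := by
  have hq : 0 ≤ q := by
    have hnq : 0 ≤ (n + 1) * q := le_trans (by positivity) h
    exact nonneg_of_mul_nonneg_right hnq (by positivity)
  have hpq : 1 - p ≤ (n + 1) * (q - p) := by linarith
  calc p ^ n = p ^ (n + 1) + p ^ n * (1 - p) := by ring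
    _ ≤ p ^ (n + 1) + p ^ n * ((n + 1) * (q - p)) := by gcongr
    _ = p ^ (n + 1) + (n + 1 : ℕ) * p ^ n * (q - p) := by push_cast; ring
    _ ≤ (p + (q - p)) ^ (n + 1) := pow_add_mul_le_add_pow hp (by linarith) (n + 1)
    _ = q ^ (n + 1) := by rw [add_sub_cancel]

/-- The probability that a point is not yet captured when a given terminal arrives, if `n` of the
other terminals capture it with probability `a` each, one more with probability `b`, and all
arrive at independent uniform times; `t` is the arrival time of the given terminal. -/
noncomputable def survivalProb (n : ℕ) (a b : ℝ) : ℝ :=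
  ∫ t in (0 : ℝ)..1, (1 - t * b) * (1 - t * a) ^ n

lemma survivalProb_le_succ {n : ℕ} {a a' b : ℝ} (ha : a ≤ 1) (hb : b ≤ 1)
    (h : (n + 1) * a' ≤ n * a) : survivalProb n a b ≤ survivalProb (n + 1) a' b := by
  refine intervalIntegral.integral_mono_on zero_le_one
    (Continuous.intervalIntegrable (by fun_prop) _ _)
    (Continuous.intervalIntegrable (by fun_prop) _ _) ?_
  rintro t ⟨ht0, ht1⟩
  have one_sub_mul_nonneg {z : ℝ} (hz : z ≤ 1) : 0 ≤ 1 - t * z :=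
    sub_nonneg.2 ((mul_le_of_le_one_right ht0 hz).trans ht1)
  refine mul_le_mul_of_nonneg_left ?_ (one_sub_mul_nonneg hb)
  refine pow_le_pow_succ_of_mul_add_one_le (one_sub_mul_nonneg ha) ?_
  have scaled : t * ((n + 1) * a') ≤ t * (n * a) := mul_le_mul_of_nonneg_left h ht0
  linarith

lemma Fcdf_le_one (z : ℝ) : Fcdf z ≤ 1 := min_le_right _ _

lemma Fcdf_eq_mul {z : ℝ} (hz : z ≤ 6 / 11) : Fcdf z = 11 / 6 * z :=
  min_eq_left (by linarith)

lemma Fpdf_nonneg (z : ℝ) : 0 ≤ Fpdf z := by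
  unfold Fpdf
  split_ifs <;> norm_num

lemma succ_mul_Fcdf_div_succ_le {n : ℕ} (hn : n ≠ 0) {s : ℝ} (hs : s / n ≤ 6 / 11) :
    (n + 1) * Fcdf (s / (n + 1)) ≤ n * Fcdf (s / n) :=
  calc (n + 1) * Fcdf (s / (n + 1)) ≤ (n + 1) * (11 / 6 * (s / (n + 1))) := by
        gcongr
        exact min_le_left _ _
    _ = n * (11 / 6 * (s / n)) := by field_simp
    _ = n * Fcdf (s / n) := by rw [Fcdf_eq_mul hs]

lemma dDensity_eq_integral (k : ℕ) (hk : 2 ≤ k) (x : Fin k → ℝ) :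
    dDensity k hk x =
      Fpdf (x ⟨0, by omega⟩) *
          (∫ t in (0 : ℝ)..1, ∏ i ∈ Finset.univ.erase ⟨0, by omega⟩, (1 - t * Fcdf (x i))) +
        Fpdf (x ⟨1, by omega⟩) *
          ∫ t in (0 : ℝ)..1, ∏ i ∈ Finset.univ.erase ⟨1, by omega⟩, (1 - t * Fcdf (x i)) := by
  simp only [← inv_factorial_mul_sum_perm_prod_one_sub_eq_integral, Fintype.card_fin, dDensity,
    Finset.sum_add_distrib, ← Finset.mul_sum]
  ring

lemma dDensity_eq_survivalProb {k : ℕ} (hk : 2 ≤ k) {x : Fin k → ℝ} {c : ℝ}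
    (hc : ∀ i : Fin k, 2 ≤ (i : ℕ) → x i = c) :
    dDensity k hk x =
      Fpdf (x ⟨0, by omega⟩) * survivalProb (k - 2) (Fcdf c) (Fcdf (x ⟨1, by omega⟩)) +
        Fpdf (x ⟨1, by omega⟩) * survivalProb (k - 2) (Fcdf c) (Fcdf (x ⟨0, by omega⟩)) := by
  have prod_erase {a b : Fin k} (hab : a ≠ b) (ha : (a : ℕ) < 2) (hb : (b : ℕ) < 2) (t : ℝ) :
      ∏ i ∈ Finset.univ.erase a, (1 - t * Fcdf (x i)) =
        (1 - t * Fcdf (x b)) * (1 - t * Fcdf c) ^ (k - 2) := by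
    rw [prod_univ_erase_eq_mul_pow hab (c := 1 - t * Fcdf c), Fintype.card_fin]
    intro i hia hib
    rw [hc i (by omega)]
  rw [dDensity_eq_integral, survivalProb, survivalProb]
  simp only [prod_erase (a := ⟨0, by omega⟩) (b := ⟨1, by omega⟩) (by simp) (by simp) (by simp),
    prod_erase (a := ⟨1, by omega⟩) (b := ⟨0, by omega⟩) (by simp) (by simp) (by simp)]

lemma Cdensity_add_two (n : ℕ) (hn : 3 ≤ n + 2) (x1 x2 : ℝ) :
    Cdensity (n + 2) hn x1 x2 =
      Fpdf x1 * survivalProb n (Fcdf ((1 - x1 - x2) / n)) (Fcdf x2) +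
        Fpdf x2 * survivalProb n (Fcdf ((1 - x1 - x2) / n)) (Fcdf x1) := by
  have sub_two : ((n + 2 : ℕ) : ℝ) - 2 = n := by push_cast; ring
  rw [Cdensity, sub_two, dDensity_eq_survivalProb (c := (1 - x1 - x2) / n)]
  · rfl
  · intro i hi
    rw [if_neg (by omega), if_neg (by omega)]

theorem Cdensity_mono_general (k : ℕ) (hk : 3 ≤ k) (x1 x2 : ℝ)
    (hc : (1 - x1 - x2) / (k - 2) ≤ 6 / 11) :
    Cdensity k hk x1 x2 ≤ Cdensity (k + 1) (by omega) x1 x2 := by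
  obtain ⟨n, rfl⟩ := Nat.exists_eq_add_of_le' (show 2 ≤ k by omega)
  have hs : (1 - x1 - x2) / n ≤ 6 / 11 := by simpa using hc
  have survival_le (z : ℝ) :
      survivalProb n (Fcdf ((1 - x1 - x2) / n)) (Fcdf z) ≤
        survivalProb (n + 1) (Fcdf ((1 - x1 - x2) / (n + 1 : ℕ))) (Fcdf z) := by
    refine survivalProb_le_succ (Fcdf_le_one _) (Fcdf_le_one _) ?_
    exact_mod_cast succ_mul_Fcdf_div_succ_le (by omega) hs
  rw [Cdensity_add_two n, Cdensity_add_two (n + 1)]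
  exact add_le_add (mul_le_mul_of_nonneg_left (survival_le x2) (Fpdf_nonneg x1))
    (mul_le_mul_of_nonneg_left (survival_le x1) (Fpdf_nonneg x2))

/-- for `k ≥ 4`, `C_k(x_1, x_2) ≤ C_{k+1}(x_1, x_2)`. -/
theorem Cdensity_mono (k : ℕ) (hk : 4 ≤ k) (x1 x2 : ℝ) (h1 : 0 ≤ x1) (h2 : 0 ≤ x2)
    (h12 : x1 + x2 ≤ 1) :
    Cdensity k (by omega) x1 x2 ≤ Cdensity (k + 1) (by omega) x1 x2 := by
  have hk' : (4 : ℝ) ≤ k := mod_cast hk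
  exact Cdensity_mono_general k _ x1 x2 ((div_le_iff₀ (by linarith)).2 (by linarith))
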